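/- Let (A(t))_{t∈ℕ} be a sequence of row-stochastic nonnegative n×n matrices and let A(0,t) := A(t−1)···A(0) be the backward products. If the row-diameter d(A(0,t)) (the maximum Euclidean distance between two rows of A(0,t)) tends to 0 as t → ∞, then A(0,t) converges to a consensus matrix K, i.e., a row-stochastic matrix all of whose rows are equal. -/

import Mathlib

open Matrix Filter Finset

/-- A confidence matrix is a row-stochastic matrix with nonnegative entries. -/
def RowStochastic {n : ℕ} (A : Matrix (Fin n) (Fin n) ℝ) : Prop :=
  (∀ i j, 0 ≤ A i j) ∧ ∀ i, ∑ j, A i j = 1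

/-- Backward accumulation `A(0,t) = A(t-1) ⋯ A(0)`. -/
def backProd {n : ℕ} (A : ℕ → Matrix (Fin n) (Fin n) ℝ) : ℕ → Matrix (Fin n) (Fin n) ℝ
  | 0 => 1
  | t + 1 => A t * backProd A t

/-- The row-diameter of a matrix: the maximum Euclidean distance between two rows. -/
noncomputable def rowDiam {n : ℕ} (M : Matrix (Fin n) (Fin n) ℝ) : ℝ :=
  ⨆ (i : Fin n) (j : Fin n), Real.sqrt (∑ k, (M i k - M j k) ^ 2)

lemma backProd_stoch {n : ℕ} (A : ℕ → Matrix (Fin n) (Fin n) ℝ)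
    (hstoch : ∀ t, RowStochastic (A t)) (t : ℕ) : RowStochastic (backProd A t) := by
  induction t with
  | zero =>
    refine ⟨fun i j => ?_, fun i => ?_⟩
    · simp only [backProd, Matrix.one_apply]; split_ifs <;> norm_num
    · simp [backProd, Matrix.one_apply]
  | succ t ih =>
    refine ⟨fun i j => ?_, fun i => ?_⟩
    · simp only [backProd, Matrix.mul_apply]
      exact Finset.sum_nonneg fun l _ => mul_nonneg ((hstoch t).1 i l) (ih.1 l j)
    · simp only [backProd, Matrix.mul_apply]
      rw [Finset.sum_comm]
      simp only [← Finset.mul_sum, ih.2, mul_one]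
      exact (hstoch t).2 i

lemma abs_le_rowDiam {n : ℕ} (M : Matrix (Fin n) (Fin n) ℝ) (i j k : Fin n) :
    |M i k - M j k| ≤ rowDiam M := by
  have h1 : |M i k - M j k| ≤ Real.sqrt (∑ k, (M i k - M j k) ^ 2) := by
    apply Real.abs_le_sqrt
    exact Finset.single_le_sum (f := fun k => (M i k - M j k) ^ 2)
      (fun _ _ => sq_nonneg _) (Finset.mem_univ k)
  refine h1.trans ?_
  unfold rowDiam
  refine le_trans ?_ (le_ciSup (Set.finite_range _).bddAbove i)
  exact le_ciSup (f := fun j => Real.sqrt (∑ k, (M i k - M j k) ^ 2))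
    (Set.finite_range _).bddAbove j

lemma abs_later_le {n : ℕ} (A : ℕ → Matrix (Fin n) (Fin n) ℝ)
    (hstoch : ∀ t, RowStochastic (A t)) (t s : ℕ) (hts : t ≤ s) (j k : Fin n) :
    ∀ i, |backProd A s i k - backProd A t j k| ≤ rowDiam (backProd A t) := by
  induction s, hts using Nat.le_induction with
  | base => exact fun i => abs_le_rowDiam _ i j k
  | succ s _ ih =>
    intro i
    have e : backProd A (s + 1) i k - backProd A t j k
        = ∑ l, A s i l * (backProd A s l k - backProd A t j k) := by
      simp only [mul_sub, Finset.sum_sub_distrib, ← Finset.sum_mul, (hstoch s).2 i, one_mul]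
      simp [backProd, Matrix.mul_apply]
    rw [e]
    calc _ ≤ ∑ l, |A s i l * (backProd A s l k - backProd A t j k)| :=
          Finset.abs_sum_le_sum_abs _ _
      _ ≤ ∑ l, A s i l * rowDiam (backProd A t) := by
          refine Finset.sum_le_sum fun l _ => ?_
          rw [abs_mul, abs_of_nonneg ((hstoch s).1 i l)]
          exact mul_le_mul_of_nonneg_left (ih l) ((hstoch s).1 i l)
      _ = _ := by rw [← Finset.sum_mul, (hstoch s).2 i, one_mul]

/-- If the row-diameter of the backward products of row-stochastic matrices tends to zero,
then the backward products converge to a consensus matrix. -/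
theorem consensus_of_rowDiam_tendsto_zero
    (n : ℕ) (A : ℕ → Matrix (Fin n) (Fin n) ℝ)
    (hstoch : ∀ t, RowStochastic (A t))
    (hdiam : Tendsto (fun t => rowDiam (backProd A t)) atTop (nhds 0)) :
    ∃ K : Matrix (Fin n) (Fin n) ℝ,
      RowStochastic K ∧ (∀ i j : Fin n, K i = K j) ∧
      Tendsto (fun t => backProd A t) atTop (nhds K) := by
  have hlim : ∀ i k, ∃ x, Tendsto (fun t => backProd A t i k) atTop (nhds x) := by
    intro i k
    apply cauchySeq_tendsto_of_complete
    refine cauchySeq_of_le_tendsto_0 (fun t => 2 * rowDiam (backProd A t)) ?_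
      (by simpa using hdiam.const_mul 2)
    intro p q N hp hq
    have h1 := abs_le.1 (abs_later_le A hstoch N p hp i k i)
    have h2 := abs_le.1 (abs_later_le A hstoch N q hq i k i)
    rw [Real.dist_eq, abs_le]
    constructor <;> linarith [h1.1, h1.2, h2.1, h2.2]
  choose K hK using hlim
  refine ⟨K, ⟨fun i j => ?_, fun i => ?_⟩, fun i j => ?_, ?_⟩
  · exact ge_of_tendsto' (hK i j) fun t => (backProd_stoch A hstoch t).1 i j
  · have h := tendsto_finsetSum Finset.univ fun j _ => hK i j
    simp only [(backProd_stoch A hstoch _).2 i] at h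
    exact tendsto_nhds_unique h tendsto_const_nhds
  · funext k
    have h0 : Tendsto (fun t => backProd A t i k - backProd A t j k) atTop (nhds 0) :=
      squeeze_zero_norm (fun t => abs_le_rowDiam _ i j k) hdiam
    exact sub_eq_zero.1 (tendsto_nhds_unique ((hK i k).sub (hK j k)) h0)
  · exact tendsto_pi_nhds.2 fun i => tendsto_pi_nhds.2 fun k => hK i k
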